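/- Let U, V be open neighborhoods of 0 in ℂ × ℂ, let φ = (φ₁, φ₂) : U → V be a biholomorphism with φ(0) = 0, let g be complex analytic on V, and set f := g ∘ φ. Let α : ℂ → ℂ be analytic near 0 with α(0) = 0, assume ψ(y) := φ₂(α(y), y) has vanishing order exactly 1 at 0, and let β(w) := φ₁(α(ψ⁻¹(w)), ψ⁻¹(w)), so that φ(α(y), y) = (β(ψ(y)), ψ(y)) near 0. For each natural number q ≥ 1 set Λ_f(q) := inf over u ∈ ℂ of min( ord₀(y ↦ f_x(α(y)+u y^q, y)), ord₀(y ↦ f_y(α(y)+u y^q, y)) ) and Λ_g(q) := inf over u ∈ ℂ of min( ord₀(w ↦ g_x(β(w)+u w^q, w)), ord₀(w ↦ g_y(β(w)+u w^q, w)) ). Then Λ_f(q) = Λ_g(q) for every natural number q ≥ 1. -/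

import Mathlib

open Filter

/-- The vanishing order at `0` of a function `u : ℂ → ℂ`: the least `n` such that the
`n`-th Taylor coefficient of `u` at `0` is nonzero, in `ℕ∞` (`⊤` if none is). -/
noncomputable def ord₀ (u : ℂ → ℂ) : ℕ∞ :=
  sInf ((fun n : ℕ => (n : ℕ∞)) '' {n : ℕ | iteratedDeriv n u 0 ≠ 0})

/-- `Λ_f(q)`: the infimum over `u ∈ ℂ` of the minimum of the vanishing orders at `0` of
`y ↦ f_x(α(y)+u y^q, y)` and `y ↦ f_y(α(y)+u y^q, y)`. -/
noncomputable def gradOrdPert (f : ℂ × ℂ → ℂ) (α : ℂ → ℂ) (q : ℕ) : ℕ∞ :=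
  ⨅ u : ℂ,
    min (ord₀ (fun y => fderiv ℂ f (α y + u * y ^ q, y) (1, 0)))
        (ord₀ (fun y => fderiv ℂ f (α y + u * y ^ q, y) (0, 1)))

/-!
Put `N(x, y) = |y| + |x - α y| ^ (1 / q)`. By the Schwarz lemma along the weighted rays
`z ↦ (z ^ q t, z s)` in the coordinates `(x - α y, y)`, a holomorphic function is `O(y ^ n)` along
each curve `(α y + u y ^ q, y)` if and only if it is `O(N ^ n)` near the origin. Applied to the
gradient, this says that `Λ_f(q)` is the supremum of the `n` with `∇f = O(N ^ n)`.

A holomorphic map fixing the origin and carrying the arc `α` into the arc `β` multiplies `N` by at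
most a constant, and by the chain rule it multiplies gradients by a bounded factor, so composing
with it cannot lower `Λ`. A biholomorphism and its inverse give the two inequalities.
-/

open Asymptotics Metric
open scoped Topology

section VanishingOrder

variable {𝕜 E : Type*} [NontriviallyNormedField 𝕜] [NormedAddCommGroup E] [NormedSpace 𝕜 E]

lemma sub_pow_isBigO_sub_pow_iff {z₀ : 𝕜} {m n : ℕ} :
    (fun z => (z - z₀) ^ m) =O[𝓝 z₀] (fun z => (z - z₀) ^ n) ↔ n ≤ m := by
  have hlittle {k l : ℕ} (hkl : k < l) :
      (fun z => (z - z₀) ^ l) =o[𝓝 z₀] (fun z => (z - z₀) ^ k) :=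
    (isLittleO_pow_pow hkl).comp_tendsto (tendsto_sub_nhds_zero_iff.mpr tendsto_id)
  refine ⟨fun h => le_of_not_gt fun hmn => ?_, fun hnm => ?_⟩
  · have hne : ∀ᶠ z in 𝓝[≠] z₀, (z - z₀) ^ m ≠ 0 :=
      eventually_mem_nhdsWithin.mono fun z hz => pow_ne_zero m (sub_ne_zero.mpr hz)
    exact isLittleO_irrefl hne.frequently
      ((h.trans_isLittleO (hlittle hmn)).mono nhdsWithin_le_nhds)
  · obtain rfl | hlt := hnm.eq_or_lt
    exacts [isBigO_refl _ _, (hlittle hlt).isBigO]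

lemma isTheta_sub_pow_of_analyticOrderAt_eq {u : 𝕜 → E} {z₀ : 𝕜} (hu : AnalyticAt 𝕜 u z₀) {m : ℕ}
    (hm : analyticOrderAt u z₀ = m) : u =Θ[𝓝 z₀] fun z => (z - z₀) ^ m := by
  obtain ⟨v, hv, hv0, huv⟩ := hu.analyticOrderAt_eq_natCast.mp hm
  have hvΘ : v =Θ[𝓝 z₀] fun _ => (1 : 𝕜) :=
    ((isEquivalent_const_iff_tendsto hv0).mpr hv.continuousAt).isTheta.trans
      (isTheta_const_const hv0 one_ne_zero)
  have huv : u =ᶠ[𝓝 z₀] fun z => (z - z₀) ^ m • v z := huv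
  simpa using huv.isTheta.trans ((isTheta_refl (fun z => (z - z₀) ^ m) _).smul hvΘ)

lemma natCast_le_analyticOrderAt_iff_isBigO {u : 𝕜 → E} {z₀ : 𝕜} (hu : AnalyticAt 𝕜 u z₀)
    (n : ℕ) : (n : ℕ∞) ≤ analyticOrderAt u z₀ ↔ u =O[𝓝 z₀] fun z => (z - z₀) ^ n := by
  cases hm : analyticOrderAt u z₀ with
  | top =>
    have hu0 : u =ᶠ[𝓝 z₀] 0 := analyticOrderAt_eq_top.mp hm
    simpa using hu0.trans_isBigO (isBigO_zero _ _)
  | coe m =>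
    rw [(isTheta_sub_pow_of_analyticOrderAt_eq hu hm).isBigO_congr_left,
      sub_pow_isBigO_sub_pow_iff, Nat.cast_le]

lemma ord₀_eq_analyticOrderAt {u : ℂ → ℂ} (hu : AnalyticAt ℂ u 0) :
    ord₀ u = analyticOrderAt u 0 := by
  refine ENat.eq_of_forall_natCast_le_iff fun n => ?_
  rw [natCast_le_analyticOrderAt_iff_iteratedDeriv_eq_zero hu]
  simp only [ord₀, le_sInf_iff, Set.forall_mem_image, Set.mem_ofPred_eq, Nat.cast_le]
  exact forall_congr' fun i => by rw [← not_imp_not, not_not, not_le]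

lemma natCast_le_ord₀_iff_isBigO {u : ℂ → ℂ} (hu : AnalyticAt ℂ u 0) (n : ℕ) :
    (n : ℕ∞) ≤ ord₀ u ↔ u =O[𝓝 0] (fun y => y ^ n) := by
  rw [ord₀_eq_analyticOrderAt hu, natCast_le_analyticOrderAt_iff_isBigO hu]
  simp only [sub_zero]

end VanishingOrder

section ContinuousLinearMap

variable {𝕜 F X : Type*} [NontriviallyNormedField 𝕜] [NormedAddCommGroup F] [NormedSpace 𝕜 F]

lemma opNorm_le_norm_apply_add_norm_apply (L : 𝕜 × 𝕜 →L[𝕜] F) :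
    ‖L‖ ≤ ‖L (1, 0)‖ + ‖L (0, 1)‖ := by
  refine L.opNorm_le_bound (by positivity) fun p => ?_
  calc ‖L p‖ = ‖p.1 • L (1, 0) + p.2 • L (0, 1)‖ := by simp [← map_smul, ← map_add]
    _ ≤ ‖p.1‖ * ‖L (1, 0)‖ + ‖p.2‖ * ‖L (0, 1)‖ := by
      simpa only [norm_smul] using norm_add_le (p.1 • L (1, 0)) (p.2 • L (0, 1))
    _ ≤ ‖p‖ * ‖L (1, 0)‖ + ‖p‖ * ‖L (0, 1)‖ := by
      gcongr
      exacts [norm_fst_le p, norm_snd_le p]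
    _ = (‖L (1, 0)‖ + ‖L (0, 1)‖) * ‖p‖ := by ring

lemma isBigO_iff_isBigO_apply_and_isBigO_apply {G : Type*} [Norm G] {l : Filter X}
    {L : X → 𝕜 × 𝕜 →L[𝕜] F} {b : X → G} :
    L =O[l] b ↔ (fun x => L x (1, 0)) =O[l] b ∧ (fun x => L x (0, 1)) =O[l] b := by
  refine ⟨fun h => ?_, fun ⟨h₁, h₂⟩ => ?_⟩
  · have happly (v : 𝕜 × 𝕜) : (fun x => L x v) =O[l] b :=
      ((ContinuousLinearMap.apply 𝕜 F v).isBigO_comp L l).trans h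
    exact ⟨happly _, happly _⟩
  · exact (IsBigO.of_norm_le fun x => opNorm_le_norm_apply_add_norm_apply (L x)).trans
      (h₁.norm_left.add h₂.norm_left)

end ContinuousLinearMap

lemma isBigO_fderiv_comp {𝕜 E F G : Type*} [NontriviallyNormedField 𝕜]
    [NormedAddCommGroup E] [NormedSpace 𝕜 E] [NormedAddCommGroup F] [NormedSpace 𝕜 F]
    [NormedAddCommGroup G] [NormedSpace 𝕜 G] {g : F → G} {φ : E → F} {x : E}
    (hg : ∀ᶠ p in 𝓝 (φ x), DifferentiableAt 𝕜 g p) (hφ : ContDiffAt 𝕜 1 φ x) :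
    fderiv 𝕜 (g ∘ φ) =O[𝓝 x] fun p => fderiv 𝕜 g (φ p) := by
  have hchain : fderiv 𝕜 (g ∘ φ) =ᶠ[𝓝 x] fun p => (fderiv 𝕜 g (φ p)).comp (fderiv 𝕜 φ p) := by
    filter_upwards [hφ.continuousAt.eventually hg, hφ.eventually (by simp)] with p hgp hφp
    exact fderiv_comp p hgp (hφp.differentiableAt one_ne_zero)
  have hbdd : fderiv 𝕜 φ =O[𝓝 x] fun _ => (1 : ℝ) :=
    (hφ.fderiv_right (m := 0) le_rfl).continuousAt.isBigO_one ℝ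
  refine hchain.trans_isBigO (IsBigO.trans
    (.of_norm_le fun p => ContinuousLinearMap.opNorm_comp_le _ _) ?_)
  simpa using ((isBigO_refl (fun p => fderiv 𝕜 g (φ p)) (𝓝 x)).norm_left.norm_right.mul
    hbdd.norm_left).norm_right

lemma isBigO_nhds_of_isBigO_nhdsWithin_dense {X E F : Type*} [TopologicalSpace X]
    [SeminormedAddCommGroup E] [SeminormedAddCommGroup F] {f : X → E} {g : X → F} {x : X}
    {s : Set X} (hs : Dense s) (hf : ∀ᶠ p in 𝓝 x, ContinuousAt f p)
    (hg : ∀ᶠ p in 𝓝 x, ContinuousAt g p)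
    (h : f =O[𝓝[s] x] g) : f =O[𝓝 x] g := by
  obtain ⟨C, hC⟩ := h.bound
  refine .of_bound C ?_
  filter_upwards [(eventually_nhdsWithin_iff.mp hC).eventually_nhds, hf, hg] with p hCp hfp hgp
  have : (𝓝[s] p).NeBot := mem_closure_iff_nhdsWithin_neBot.mp (hs p)
  exact le_of_tendsto_of_tendsto (hfp.norm.mono_left nhdsWithin_le_nhds)
    ((hgp.norm.const_mul C).mono_left nhdsWithin_le_nhds) (eventually_nhdsWithin_iff.mpr hCp)

lemma norm_le_mul_div_pow_of_isBigO {E F : Type*} [NormedAddCommGroup E] [NormedSpace ℂ E]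
    [NormedAddCommGroup F] [NormedSpace ℂ F] {h : E → F} {c z : E} {r M : ℝ} {n : ℕ}
    (hd : DifferentiableOn ℂ h (ball c r)) (hM : ∀ w ∈ ball c r, ‖h w‖ ≤ M)
    (hO : h =O[𝓝 c] fun w => ‖w - c‖ ^ n) (hz : z ∈ ball c r) :
    ‖h z‖ ≤ M * (dist z c / r) ^ n := by
  cases n with
  | zero => simpa using hM z hz
  | succ n =>
    have hc : h c = 0 := hO.eq_zero_of_norm_pow n.succ_ne_zero
    have hlittle : (h · - h c) =o[𝓝 c] fun w => ‖w - c‖ ^ n := by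
      simpa only [hc, sub_zero] using
        hO.trans_isLittleO (isLittleO_pow_sub_pow_sub c n.lt_succ_self)
    simpa [hc] using Complex.dist_le_mul_div_pow_of_mapsTo_ball_of_isLittleO hd
      (fun w hw => by simpa [hc] using hM w hw) hlittle hz

section WeightedNorm

variable {E : Type*} [NormedAddCommGroup E] {q : ℕ}

/-- The weighted quasi-norm on `E × ℂ` for which the first coordinate has weight `q` and the second
has weight `1`, measuring the vanishing of functions along the curves `w ↦ (w ^ q • t, w)`.
For `q = 0` the exponent `q⁻¹` is `0`, so this is only meaningful for `q ≠ 0`. -/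
noncomputable def weightedNorm (q : ℕ) (p : E × ℂ) : ℝ :=
  ‖p.2‖ + ‖p.1‖ ^ (q : ℝ)⁻¹

lemma weightedNorm_nonneg (p : E × ℂ) : 0 ≤ weightedNorm q p := by
  unfold weightedNorm; positivity

lemma weightedNorm_eq_zero (hq : q ≠ 0) {p : E × ℂ} : weightedNorm q p = 0 ↔ p = 0 := by
  rw [weightedNorm, add_eq_zero_iff_of_nonneg (norm_nonneg _) (by positivity),
    Real.rpow_eq_zero (norm_nonneg _) (by simpa using hq), norm_eq_zero, norm_eq_zero,
    Prod.ext_iff, and_comm]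
  rfl

lemma continuous_weightedNorm : Continuous (weightedNorm q : E × ℂ → ℝ) :=
  continuous_snd.norm.add (continuous_fst.norm.rpow_const fun _ => .inr (by positivity))

lemma norm_le_weightedNorm (hq : q ≠ 0) {p : E × ℂ} (hp : weightedNorm q p ≤ 1) :
    ‖p‖ ≤ weightedNorm q p := by
  have hfst : ‖p.1‖ ^ (q : ℝ)⁻¹ ≤ weightedNorm q p := le_add_of_nonneg_left (norm_nonneg _)
  have hsnd : ‖p.2‖ ≤ weightedNorm q p := le_add_of_nonneg_right (by positivity)
  refine norm_prod_le_iff.mpr ⟨?_, hsnd⟩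
  calc ‖p.1‖ = (‖p.1‖ ^ (q : ℝ)⁻¹) ^ q := (Real.rpow_inv_natCast_pow (norm_nonneg _) hq).symm
    _ ≤ ‖p.1‖ ^ (q : ℝ)⁻¹ := pow_le_of_le_one (by positivity) (hfst.trans hp) hq
    _ ≤ weightedNorm q p := hfst

lemma isBigO_id_weightedNorm (hq : q ≠ 0) :
    (fun p : E × ℂ => p) =O[𝓝 0] (weightedNorm q : E × ℂ → ℝ) := by
  have hsmall : ∀ᶠ p : E × ℂ in 𝓝 0, weightedNorm q p < 1 :=
    continuous_weightedNorm.continuousAt.eventually_lt continuousAt_const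
      (by simp [(weightedNorm_eq_zero hq).mpr])
  exact .of_norm_eventuallyLE (hsmall.mono fun p hp => norm_le_weightedNorm hq hp.le)

end WeightedNorm

section WeightedDilation

variable {E F : Type*} [NormedAddCommGroup E] [NormedSpace ℂ E] [NormedAddCommGroup F] {q n : ℕ}

/-- The dilation of `E × ℂ` by `z` that gives weight `q` to the first coordinate and weight `1` to
the second. Its orbits through points with nonzero second coordinate are the curves
`w ↦ (w ^ q • t, w)`. -/
def weightedDilation (q : ℕ) (z : ℂ) (p : E × ℂ) : E × ℂ :=
  (z ^ q • p.1, z * p.2)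

lemma weightedNorm_weightedDilation (hq : q ≠ 0) (z : ℂ) (p : E × ℂ) :
    weightedNorm q (weightedDilation q z p) = ‖z‖ * weightedNorm q p := by
  simp only [weightedNorm, weightedDilation, norm_mul, norm_smul, norm_pow]
  rw [Real.mul_rpow (by positivity) (norm_nonneg _), Real.pow_rpow_inv_natCast (norm_nonneg _) hq,
    mul_add]

lemma norm_weightedDilation_le (hq : q ≠ 0) {z : ℂ} (hz : ‖z‖ ≤ 1) {p : E × ℂ} (hp : ‖p‖ ≤ 1) :
    ‖weightedDilation q z p‖ ≤ ‖z‖ := by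
  obtain ⟨hfst, hsnd⟩ := norm_prod_le_iff.mp hp
  refine norm_prod_le_iff.mpr ⟨?_, ?_⟩
  · calc ‖z ^ q • p.1‖ = ‖z‖ ^ q * ‖p.1‖ := by rw [norm_smul, norm_pow]
      _ ≤ ‖z‖ * 1 := by
        gcongr
        exact pow_le_of_le_one (norm_nonneg z) hz hq
      _ = ‖z‖ := mul_one _
  · exact (norm_mul_le z p.2).trans (mul_le_of_le_one_right (norm_nonneg z) hsnd)

lemma exists_weightedDilation_eq (hq : q ≠ 0) (p : E × ℂ) :
    ∃ p', ‖p'‖ ≤ 1 ∧ weightedDilation q (weightedNorm q p) p' = p := by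
  obtain rfl | hp := eq_or_ne p 0
  · exact ⟨0, by simp, by simp [weightedDilation]⟩
  · have hρ : weightedNorm q p ≠ 0 := (weightedNorm_eq_zero hq).not.mpr hp
    have hρ' : (weightedNorm q p : ℂ) ≠ 0 := by exact_mod_cast hρ
    have hunit : weightedNorm q (weightedDilation q (weightedNorm q p : ℂ)⁻¹ p) = 1 := by
      rw [weightedNorm_weightedDilation hq, norm_inv,
        Complex.norm_of_nonneg (weightedNorm_nonneg p), inv_mul_cancel₀ hρ]
    exact ⟨_, (norm_le_weightedNorm hq hunit.le).trans hunit.le,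
      by simp [weightedDilation, smul_smul, hρ']⟩

lemma isBigO_comp_weightedDilation_of_snd_ne_zero {G : E × ℂ → F}
    (hO : ∀ t : E, (fun w : ℂ => G (w ^ q • t, w)) =O[𝓝 0] fun w => w ^ n)
    {p : E × ℂ} (hp : p.2 ≠ 0) :
    (fun z => G (weightedDilation q z p)) =O[𝓝 0] fun z => z ^ n := by
  have hlim : Tendsto (fun z : ℂ => z * p.2) (𝓝 0) (𝓝 0) := by
    simpa using (continuous_mul_const p.2).tendsto 0
  have hray (z : ℂ) : weightedDilation q z p = ((z * p.2) ^ q • (p.2⁻¹ ^ q • p.1), z * p.2) := by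
    rw [smul_smul, ← mul_pow, mul_inv_cancel_right₀ hp, weightedDilation]
  simp only [hray]
  calc (fun z => G ((z * p.2) ^ q • (p.2⁻¹ ^ q • p.1), z * p.2))
      =O[𝓝 0] fun z => (z * p.2) ^ n := (hO _).comp_tendsto hlim
    _ =O[𝓝 0] fun z => z ^ n := by
        simpa only [mul_pow, mul_comm] using isBigO_const_mul_self (p.2 ^ n) (fun z => z ^ n) (𝓝 0)

variable [NormedSpace ℂ F]

lemma exists_norm_comp_weightedDilation_le (hq : q ≠ 0) {G : E × ℂ → F}
    (hG : ∀ᶠ p in 𝓝 0, DifferentiableAt ℂ G p)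
    (hO : ∀ t : E, (fun w : ℂ => G (w ^ q • t, w)) =O[𝓝 0] fun w => w ^ n) :
    ∃ M r : ℝ, 0 < r ∧ ∀ z ∈ ball (0 : ℂ) r, ∀ p : E × ℂ, ‖p‖ ≤ 1 → p.2 ≠ 0 →
      ‖G (weightedDilation q z p)‖ ≤ M * (‖z‖ / r) ^ n := by
  have hbdd : ∀ᶠ p in 𝓝 0, ‖G p‖ < ‖G 0‖ + 1 :=
    hG.self_of_nhds.continuousAt.norm.eventually_lt continuousAt_const (by simp)
  obtain ⟨ε, hε, hball⟩ := Metric.eventually_nhds_iff_ball.mp (hG.and hbdd)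
  refine ⟨‖G 0‖ + 1, min ε 1, by positivity, fun z hz p hp hp2 => ?_⟩
  have hmem {w : ℂ} (hw : w ∈ ball 0 (min ε 1)) : weightedDilation q w p ∈ ball 0 ε := by
    rw [mem_ball_zero_iff, lt_min_iff] at hw
    exact mem_ball_zero_iff.mpr ((norm_weightedDilation_le hq hw.2.le hp).trans_lt hw.1)
  rw [← dist_zero_right z]
  refine norm_le_mul_div_pow_of_isBigO (h := fun w => G (weightedDilation q w p))
    (fun w hw => ?_) (fun w hw => (hball _ (hmem hw)).2.le) ?_ hz
  · exact ((hball _ (hmem hw)).1.comp w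
      (by unfold weightedDilation; fun_prop)).differentiableWithinAt
  · simpa using (isBigO_comp_weightedDilation_of_snd_ne_zero hO hp2).norm_right

theorem isBigO_weightedNorm_pow (hq : q ≠ 0) {G : E × ℂ → F}
    (hG : ∀ᶠ p in 𝓝 0, DifferentiableAt ℂ G p)
    (hO : ∀ t : E, (fun w : ℂ => G (w ^ q • t, w)) =O[𝓝 0] fun w => w ^ n) :
    G =O[𝓝 0] fun p => weightedNorm q p ^ n := by
  obtain ⟨M, r, hr, hM⟩ := exists_norm_comp_weightedDilation_le hq hG hO
  have hsmall : ∀ᶠ p : E × ℂ in 𝓝 0, weightedNorm q p < r :=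
    continuous_weightedNorm.continuousAt.eventually_lt continuousAt_const
      (by rwa [(weightedNorm_eq_zero hq).mpr rfl])
  -- A point with `p.2 = 0` lies on no curve `w ↦ (w ^ q • t, w)`, but is a limit of points that do.
  have hdense : Dense {p : E × ℂ | p.2 ≠ 0} :=
    (dense_compl_singleton (0 : ℂ)).preimage isOpenMap_snd
  refine isBigO_nhds_of_isBigO_nhdsWithin_dense hdense (hG.mono fun p hp => hp.continuousAt)
    (.of_forall fun p => (continuous_weightedNorm.pow n).continuousAt) (.of_bound (M / r ^ n) ?_)
  filter_upwards [self_mem_nhdsWithin, nhdsWithin_le_nhds hsmall] with p hp2 hp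
  obtain ⟨p', hp', hpp'⟩ := exists_weightedDilation_eq hq p
  have hp'2 : p'.2 ≠ 0 := right_ne_zero_of_mul (a := (weightedNorm q p : ℂ))
    (by rwa [← hpp'] at hp2)
  have hρ : ‖(weightedNorm q p : ℂ)‖ = weightedNorm q p :=
    Complex.norm_of_nonneg (weightedNorm_nonneg p)
  calc ‖G p‖ = ‖G (weightedDilation q (weightedNorm q p) p')‖ := by rw [hpp']
    _ ≤ M * (‖(weightedNorm q p : ℂ)‖ / r) ^ n :=
      hM _ (by rwa [mem_ball_zero_iff, hρ]) p' hp' hp'2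
    _ = M / r ^ n * ‖weightedNorm q p ^ n‖ := by
      rw [hρ, Real.norm_of_nonneg (pow_nonneg (weightedNorm_nonneg p) n), div_pow]
      ring

end WeightedDilation

section ArcGauge

variable {E E' F : Type*} [NormedAddCommGroup E] [NormedAddCommGroup E'] [NormedAddCommGroup F]
  {q : ℕ}

/-- The weighted quasi-norm in the coordinates `(x - α y, y)`, which straighten the arc
`y ↦ (α y, y)`: a gauge of closeness to that arc, relative to closeness to the origin. -/
noncomputable def arcGauge (α : ℂ → E) (q : ℕ) (p : E × ℂ) : ℝ :=
  weightedNorm q (p.1 - α p.2, p.2)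

lemma tendsto_sub_comp_snd {α : ℂ → E} (hα : ContinuousAt α 0) (hα0 : α 0 = 0) :
    Tendsto (fun p : E × ℂ => (p.1 - α p.2, p.2)) (𝓝 0) (𝓝 0) := by
  have : ContinuousAt (fun p : E × ℂ => (p.1 - α p.2, p.2)) 0 := by fun_prop
  simpa [ContinuousAt, hα0, Prod.zero_eq_mk] using this

variable [NormedSpace ℂ E] [NormedSpace ℂ E'] [NormedSpace ℂ F]

theorem isBigO_arcGauge_pow_iff (hq : q ≠ 0) {G : E × ℂ → F}
    (hG : ∀ᶠ p in 𝓝 0, DifferentiableAt ℂ G p) {α : ℂ → E}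
    (hα : ∀ᶠ y in 𝓝 0, DifferentiableAt ℂ α y) (hα0 : α 0 = 0) {n : ℕ} :
    G =O[𝓝 0] (fun p => arcGauge α q p ^ n) ↔
      ∀ t : E, (fun y : ℂ => G (α y + y ^ q • t, y)) =O[𝓝 0] fun y => y ^ n := by
  have hαc : ContinuousAt α 0 := hα.self_of_nhds.continuousAt
  refine ⟨fun h t => ?_, fun h => ?_⟩
  · have harc : Tendsto (fun y => (α y + y ^ q • t, y)) (𝓝 0) (𝓝 0) := by
      have : ContinuousAt (fun y => (α y + y ^ q • t, y)) 0 := by fun_prop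
      simpa [ContinuousAt, hα0, Prod.zero_eq_mk, hq] using this
    have hgauge (y : ℂ) :
        arcGauge α q (α y + y ^ q • t, y) = ‖y‖ * weightedNorm q (t, (1 : ℂ)) := by
      rw [← weightedNorm_weightedDilation hq]
      simp [arcGauge, weightedDilation]
    refine (h.comp_tendsto harc).trans ?_
    simp only [Function.comp_def, hgauge, mul_pow, mul_comm _ (weightedNorm q _ ^ n), ← norm_pow]
    exact (isBigO_refl _ _).norm_left.const_mul_left _
  · have hunshear : Tendsto (fun p : E × ℂ => (α p.2 + p.1, p.2)) (𝓝 0) (𝓝 0) := by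
      have : ContinuousAt (fun p : E × ℂ => (α p.2 + p.1, p.2)) 0 := by fun_prop
      simpa [ContinuousAt, hα0, Prod.zero_eq_mk] using this
    have hstraight :
        (fun p : E × ℂ => G (α p.2 + p.1, p.2)) =O[𝓝 0] fun p => weightedNorm q p ^ n := by
      refine isBigO_weightedNorm_pow hq ?_ h
      filter_upwards [hunshear.eventually hG,
        (continuous_snd.tendsto (0 : E × ℂ)).eventually hα] with p hGp hαp
      exact hGp.comp p (by fun_prop)
    simpa [Function.comp_def, arcGauge] using
      hstraight.comp_tendsto (tendsto_sub_comp_snd hαc hα0)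

lemma isBigO_id_arcGauge (hq : q ≠ 0) {α : ℂ → E} (hα : DifferentiableAt ℂ α 0)
    (hα0 : α 0 = 0) : (fun p : E × ℂ => p) =O[𝓝 0] arcGauge α q := by
  have hshear : (fun p : E × ℂ => (p.1 - α p.2, p.2)) =O[𝓝 0] arcGauge α q :=
    (isBigO_id_weightedNorm hq).comp_tendsto (tendsto_sub_comp_snd hα.continuousAt hα0)
  obtain ⟨hdiff, hsnd⟩ := isBigO_prod_left.mp hshear
  have hαO : (fun p : E × ℂ => α p.2) =O[𝓝 0] fun p => p.2 := by
    have : α =O[𝓝 0] fun y => y := by simpa [hα0] using hα.isBigO_sub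
    exact this.comp_tendsto (continuous_snd.tendsto (0 : E × ℂ))
  simpa using (hdiff.add (hαO.trans hsnd)).prod_left hsnd

theorem arcGauge_comp_isBigO_arcGauge (hq : q ≠ 0) {φ : E × ℂ → E' × ℂ} (hφ : ContDiffAt ℂ 1 φ 0)
    (hφ0 : φ 0 = 0) {α : ℂ → E} (hα : DifferentiableAt ℂ α 0) (hα0 : α 0 = 0)
    {β : ℂ → E'} (hβ : ContDiffAt ℂ 1 β 0)
    (harc : ∀ᶠ y in 𝓝 0, (φ (α y, y)).1 = β (φ (α y, y)).2) :
    (fun p => arcGauge β q (φ p)) =O[𝓝 0] arcGauge α q := by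
  have hφO : (fun p => (φ p).2) =O[𝓝 0] arcGauge α q := by
    have : φ =O[𝓝 0] fun p => p := by
      simpa [hφ0] using (hφ.differentiableAt one_ne_zero).isBigO_sub
    exact (isBigO_snd_prod'.trans this).trans (isBigO_id_arcGauge hq hα hα0)
  let D : E × ℂ → E' := fun p => (φ p).1 - β (φ p).2
  have hDstrict : HasStrictFDerivAt D (fderiv ℂ D 0) 0 := by
    have : ContDiffAt ℂ 1 β (φ 0).2 := by simpa [hφ0] using hβ
    exact (hφ.fst.sub (this.comp 0 hφ.snd)).hasStrictFDerivAt one_ne_zero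
  have hproj : Tendsto (fun p : E × ℂ => (p, (α p.2, p.2))) (𝓝 0) (𝓝 (0, 0)) := by
    have hαc : ContinuousAt α 0 := hα.continuousAt
    have : ContinuousAt (fun p : E × ℂ => (p, (α p.2, p.2))) 0 := by fun_prop
    simpa [ContinuousAt, hα0, Prod.zero_eq_mk] using this
  have hDO : D =O[𝓝 0] fun p => p.1 - α p.2 := by
    have hvanish : ∀ᶠ p : E × ℂ in 𝓝 0, D (α p.2, p.2) = 0 :=
      (continuous_snd.tendsto (0 : E × ℂ)).eventually (harc.mono fun y hy => sub_eq_zero.mpr hy)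
    refine ((hDstrict.isBigO_sub.comp_tendsto hproj).congr'
      (hvanish.mono fun p hp => by simp [hp]) .rfl).trans ?_
    exact .of_bound 1 (.of_forall fun p => by simp [Prod.norm_def])
  have hDgauge : (fun p => ‖D p‖ ^ (q : ℝ)⁻¹) =O[𝓝 0] arcGauge α q := by
    refine (hDO.norm_norm.rpow (by positivity) (.of_forall fun p => norm_nonneg _)).trans ?_
    refine .of_norm_le fun p => ?_
    rw [Real.norm_of_nonneg (by positivity)]
    exact le_add_of_nonneg_left (norm_nonneg _)
  exact hφO.norm_left.add hDgauge

end ArcGauge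
section GradientOrder

lemma natCast_le_gradOrdPert_iff_isBigO_arcGauge {f : ℂ × ℂ → ℂ} (hf : AnalyticAt ℂ f 0)
    {α : ℂ → ℂ} (hα : AnalyticAt ℂ α 0) (hα0 : α 0 = 0) {q : ℕ} (hq : q ≠ 0) (n : ℕ) :
    (n : ℕ∞) ≤ gradOrdPert f α q ↔ fderiv ℂ f =O[𝓝 0] fun p => arcGauge α q p ^ n := by
  have hanalytic (u : ℂ) (v : ℂ × ℂ) :
      AnalyticAt ℂ (fun y => fderiv ℂ f (α y + u * y ^ q, y) v) 0 := by
    have hcurve : AnalyticAt ℂ (fun y => fderiv ℂ f (α y + u * y ^ q, y)) 0 :=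
      AnalyticAt.fun_comp (by simpa [hα0, hq, Prod.zero_eq_mk] using hf.fderiv) (by fun_prop)
    exact ((ContinuousLinearMap.apply ℂ ℂ v).analyticAt _).fun_comp hcurve
  calc (n : ℕ∞) ≤ gradOrdPert f α q
      ↔ ∀ u : ℂ, (fun y => fderiv ℂ f (α y + u * y ^ q, y)) =O[𝓝 0] fun y => y ^ n := by
        simp only [gradOrdPert, le_iInf_iff, le_min_iff,
          natCast_le_ord₀_iff_isBigO (hanalytic _ _), isBigO_iff_isBigO_apply_and_isBigO_apply]
    _ ↔ fderiv ℂ f =O[𝓝 0] fun p => arcGauge α q p ^ n := by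
        rw [isBigO_arcGauge_pow_iff hq
          (hf.fderiv.eventually_analyticAt.mono fun p hp => hp.differentiableAt)
          (hα.eventually_analyticAt.mono fun y hy => hy.differentiableAt) hα0]
        simp only [smul_eq_mul, mul_comm]

theorem gradOrdPert_le_of_eventuallyEq_comp {f g : ℂ × ℂ → ℂ} {φ : ℂ × ℂ → ℂ × ℂ} {α β : ℂ → ℂ}
    {q : ℕ} (hq : q ≠ 0) (hφ : AnalyticAt ℂ φ 0) (hφ0 : φ 0 = 0) (hg : AnalyticAt ℂ g 0)
    (hfg : f =ᶠ[𝓝 0] g ∘ φ) (hα : AnalyticAt ℂ α 0) (hα0 : α 0 = 0) (hβ : AnalyticAt ℂ β 0)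
    (harc : ∀ᶠ y in 𝓝 0, (φ (α y, y)).1 = β (φ (α y, y)).2) :
    gradOrdPert g β q ≤ gradOrdPert f α q := by
  have hg' : AnalyticAt ℂ g (φ 0) := by rwa [hφ0]
  have hf : AnalyticAt ℂ f 0 := (hg'.comp hφ).congr hfg.symm
  have hβ0 : β 0 = 0 := by
    simpa [hα0, ← Prod.zero_eq_mk, hφ0] using harc.self_of_nhds.symm
  have hφtend : Tendsto φ (𝓝 0) (𝓝 0) := by simpa [hφ0] using hφ.continuousAt.tendsto
  refine ENat.forall_natCast_le_iff_le.mp fun n hn => ?_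
  rw [natCast_le_gradOrdPert_iff_isBigO_arcGauge hg hβ hβ0 hq] at hn
  rw [natCast_le_gradOrdPert_iff_isBigO_arcGauge hf hα hα0 hq]
  calc fderiv ℂ f
      =ᶠ[𝓝 0] fderiv ℂ (g ∘ φ) := hfg.fderiv
    _ =O[𝓝 0] fun p => fderiv ℂ g (φ p) :=
        isBigO_fderiv_comp (hg'.eventually_analyticAt.mono fun p hp => hp.differentiableAt)
          hφ.contDiffAt
    _ =O[𝓝 0] fun p => arcGauge β q (φ p) ^ n := hn.comp_tendsto hφtend
    _ =O[𝓝 0] fun p => arcGauge α q p ^ n :=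
        (arcGauge_comp_isBigO_arcGauge hq hφ.contDiffAt hφ0 hα.differentiableAt hα0
          hβ.contDiffAt harc).pow n

theorem gradOrdPert_comp_eq_of_rightInverse {g : ℂ × ℂ → ℂ} {φ φinv : ℂ × ℂ → ℂ × ℂ} {α β : ℂ → ℂ}
    {q : ℕ} (hq : q ≠ 0) (hφ : AnalyticAt ℂ φ 0) (hφ0 : φ 0 = 0) (hφinv : AnalyticAt ℂ φinv 0)
    (hφinv0 : φinv 0 = 0) (hright : ∀ᶠ p in 𝓝 0, φ (φinv p) = p) (hg : AnalyticAt ℂ g 0)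
    (hα : AnalyticAt ℂ α 0) (hα0 : α 0 = 0) (hβ : AnalyticAt ℂ β 0)
    (hαβ : ∀ᶠ y in 𝓝 0, (φ (α y, y)).1 = β (φ (α y, y)).2)
    (hβα : ∀ᶠ w in 𝓝 0, (φinv (β w, w)).1 = α (φinv (β w, w)).2) :
    gradOrdPert (g ∘ φ) α q = gradOrdPert g β q := by
  have hβ0 : β 0 = 0 := by
    simpa [hα0, ← Prod.zero_eq_mk, hφ0] using hαβ.self_of_nhds.symm
  have hgφ : AnalyticAt ℂ (g ∘ φ) 0 := AnalyticAt.comp (by rwa [hφ0]) hφ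
  have hg_eq : g =ᶠ[𝓝 0] (g ∘ φ) ∘ φinv := hright.mono fun p hp => (congrArg g hp).symm
  exact le_antisymm
    (gradOrdPert_le_of_eventuallyEq_comp hq hφinv hφinv0 hgφ hg_eq hβ hβ0 hα hβα)
    (gradOrdPert_le_of_eventuallyEq_comp hq hφ hφ0 hg .rfl hα hα0 hβ hαβ)

end GradientOrder

/-- With `φ = (φ₁,φ₂) : U → V` a biholomorphism fixing `0`, `g` analytic
on `V`, `f := g ∘ φ`, `α` an arc analytic near `0` with `α(0)=0`, `ψ(y) := φ₂(α(y),y)` of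
vanishing order exactly `1`, and `β(w) := φ₁(α(ψ⁻¹(w)), ψ⁻¹(w))` (so
`φ(α(y),y) = (β(ψ(y)), ψ(y))` near `0`), the generic gradient orders satisfy
`Λ_f(q) = Λ_g(q)` for every natural number `q ≥ 1`. -/
theorem generic_gradient_order_analytic_invariant
    (U V : Set (ℂ × ℂ)) (hUopen : IsOpen U) (hVopen : IsOpen V)
    (h0U : ((0 : ℂ), (0 : ℂ)) ∈ U) (h0V : ((0 : ℂ), (0 : ℂ)) ∈ V)
    (φ φinv : ℂ × ℂ → ℂ × ℂ)
    (hφ : ∀ p ∈ U, AnalyticAt ℂ φ p) (hφinv : ∀ p ∈ V, AnalyticAt ℂ φinv p)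
    (hφUV : Set.MapsTo φ U V) (hφinvVU : Set.MapsTo φinv V U)
    (hleft : ∀ p ∈ U, φinv (φ p) = p) (hright : ∀ p ∈ V, φ (φinv p) = p)
    (hφ0 : φ (0, 0) = (0, 0))
    (g : ℂ × ℂ → ℂ) (hg : ∀ p ∈ V, AnalyticAt ℂ g p)
    (f : ℂ × ℂ → ℂ) (hf : f = g ∘ φ)
    (α : ℂ → ℂ) (hα : AnalyticAt ℂ α 0) (hα0 : α 0 = 0)
    (ψ : ℂ → ℂ) (hψ : ψ = fun y => (φ (α y, y)).2)
    (hψord : ord₀ ψ = 1)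
    (ψinv : ℂ → ℂ) (hψinv : AnalyticAt ℂ ψinv 0) (hψinv0 : ψinv 0 = 0)
    (hψleft : ∀ᶠ y in nhds (0 : ℂ), ψinv (ψ y) = y)
    (hψright : ∀ᶠ w in nhds (0 : ℂ), ψ (ψinv w) = w)
    (β : ℂ → ℂ) (hβ : β = fun w => (φ (α (ψinv w), ψinv w)).1) :
    ∀ q : ℕ, 1 ≤ q → gradOrdPert f α q = gradOrdPert g β q := by
  intro q hq
  subst hf hψ hβ
  have hφinv0 : φinv (0, 0) = (0, 0) := by simpa [hφ0] using hleft _ h0U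
  have hγ : AnalyticAt ℂ (fun w => (α (ψinv w), ψinv w)) 0 :=
    (AnalyticAt.fun_comp (by rwa [hψinv0]) hψinv).prod hψinv
  have hβ : AnalyticAt ℂ (fun w => (φ (α (ψinv w), ψinv w)).1) 0 :=
    analyticAt_fst.fun_comp (AnalyticAt.fun_comp (by simpa [hψinv0, hα0] using hφ _ h0U) hγ)
  have hγU : ∀ᶠ w in 𝓝 0, (α (ψinv w), ψinv w) ∈ U :=
    hγ.continuousAt.eventually_mem (hUopen.mem_nhds (by simpa [hψinv0, hα0] using h0U))
  refine gradOrdPert_comp_eq_of_rightInverse (Nat.one_le_iff_ne_zero.mp hq) (hφ _ h0U) hφ0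
    (hφinv _ h0V) hφinv0 (Filter.eventually_of_mem (hVopen.mem_nhds h0V) hright) (hg _ h0V)
    hα hα0 hβ ?_ ?_
  · exact hψleft.mono fun y hy => by simp only [hy]
  · filter_upwards [hψright, hγU] with w hw hwU
    have hφγ : ((φ (α (ψinv w), ψinv w)).1, w) = φ (α (ψinv w), ψinv w) := Prod.ext rfl hw.symm
    rw [hφγ, hleft _ hwU]
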